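/- Let R be a Cohen-Macaulay commutative noetherian local ring. Then every prime ideal p of R such that R_p is not a regular local ring contains the ideal ⋂ Ann_R Tor_i^R(K,L), where the intersection ranges over all integers i > 0 and all modules K, L in CM_0(R). Equivalently, the singular locus Sing R is contained in V(⋂_{i>0, K,L ∈ CM_0(R)} Ann_R Tor_i^R(K,L)). -/

import Mathlib

open CategoryTheory IsLocalRing

noncomputable section

/-- The `i`-th Tor module of two `R`-modules, as an object of `ModuleCat R`. -/
def TorMod (R : Type) [CommRing R] (i : ℕ) (M N : ModuleCat.{0} R) : ModuleCat.{0} R :=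
  ((Tor (ModuleCat.{0} R) i).obj M).obj N

/-- The `i`-th Ext module of two `R`-modules, as an object of `ModuleCat R`. -/
def ExtMod (R : Type) [CommRing R] (i : ℕ) (M N : ModuleCat.{0} R) : ModuleCat.{0} R :=
  ((Ext R (ModuleCat.{0} R) i).obj (Opposite.op M)).obj N

/-- Integer-indexed Tor: `Tor_n = 0` for `n < 0`. -/
def TorZ (R : Type) [CommRing R] (n : ℤ) (M N : ModuleCat.{0} R) : ModuleCat.{0} R :=
  if 0 ≤ n then TorMod R n.toNat M N else ModuleCat.of R PUnit

/-- Integer-indexed Ext: `Ext^n = 0` for `n < 0`. -/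
def ExtZ (R : Type) [CommRing R] (n : ℤ) (M N : ModuleCat.{0} R) : ModuleCat.{0} R :=
  if 0 ≤ n then ExtMod R n.toNat M N else ModuleCat.of R PUnit

/-- The depth of a module `N` over a local ring `S`, defined as the infimum of the set of
integers `i` such that `Ext^i(k, N) ≠ 0`, where `k` is the residue field of `S`
(`⊤` if no such `i` exists). -/
def moduleDepth (S : Type) [CommRing S] [IsLocalRing S] (N : Type) [AddCommGroup N]
    [Module S N] : ℕ∞ :=
  sInf {i : ℕ∞ | ∃ j : ℕ, i = (j : ℕ∞) ∧
    Nontrivial (ExtMod S j (ModuleCat.of S (ResidueField S)) (ModuleCat.of S N))}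

/-- A local ring is regular if it is noetherian and its maximal ideal can be generated by
(Krull dimension of `S`)-many elements. -/
def IsRegularLocal (S : Type) [CommRing S] [IsLocalRing S] : Prop :=
  IsNoetherianRing S ∧ ∃ s : Finset S, Ideal.span (s : Set S) = maximalIdeal S ∧
    (s.card : WithBot ℕ∞) = ringKrullDim S

/-- A local ring is Cohen-Macaulay if its depth (as a module over itself) equals its
Krull dimension. -/
def IsCMLocalRing (R : Type) [CommRing R] [IsLocalRing R] : Prop :=
  (moduleDepth R R : WithBot ℕ∞) = ringKrullDim R

/-- A module `M` over a local ring `R` is maximal Cohen-Macaulay if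
`depth M_p ≥ dim R_p` for every prime ideal `p` of `R`. -/
def IsMCMModule (R : Type) [CommRing R] [IsLocalRing R] (M : Type) [AddCommGroup M]
    [Module R M] : Prop :=
  ∀ (p : Ideal R) [p.IsPrime],
    ringKrullDim (Localization.AtPrime p) ≤
      (moduleDepth (Localization.AtPrime p) (LocalizedModule p.primeCompl M) : WithBot ℕ∞)

/-- Membership in `CM(R)`: finitely generated maximal Cohen-Macaulay modules. -/
def MemCM (R : Type) [CommRing R] [IsLocalRing R] (M : ModuleCat.{0} R) : Prop :=
  Module.Finite R M ∧ IsMCMModule R M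

/-- Membership in `CM₀(R)`: finitely generated maximal Cohen-Macaulay modules that are
locally free on the punctured spectrum. -/
def MemCM0 (R : Type) [CommRing R] [IsLocalRing R] (M : ModuleCat.{0} R) : Prop :=
  Module.Finite R M ∧ IsMCMModule R M ∧
    ∀ (p : Ideal R) [p.IsPrime], p ≠ maximalIdeal R →
      Module.Free (Localization.AtPrime p) (LocalizedModule p.primeCompl M)

/-- The singular locus of `R`: primes `p` such that `R_p` is not regular. -/
def singularLocus (R : Type) [CommRing R] : Set (PrimeSpectrum R) :=
  {p | ¬ IsRegularLocal (Localization.AtPrime p.asIdeal)}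

/-- The nonfree locus of a module `M`: primes `p` such that `M_p` is not a free
`R_p`-module. -/
def nonfreeLocus (R : Type) [CommRing R] (M : Type) [AddCommGroup M] [Module R M] :
    Set (PrimeSpectrum R) :=
  {p | ¬ Module.Free (Localization.AtPrime p.asIdeal)
        (LocalizedModule p.asIdeal.primeCompl M)}

/-- `K` is a first syzygy of `N` in a minimal free resolution: there is a surjection
`f : R^n → N` with `ker f ⊆ m·R^n` and `K ≅ ker f`. -/
def IsMinimalSyzygy1 (R : Type) [CommRing R] [IsLocalRing R] (N K : ModuleCat.{0} R) : Prop :=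
  ∃ (n : ℕ) (f : (Fin n → R) →ₗ[R] N), Function.Surjective f ∧
    LinearMap.ker f ≤ (maximalIdeal R) • (⊤ : Submodule R (Fin n → R)) ∧
    Nonempty (K ≃ₗ[R] LinearMap.ker f)

/-- `K` is a `d`-th syzygy of `N` in a minimal free resolution. -/
def IsMinimalSyzygy (R : Type) [CommRing R] [IsLocalRing R] :
    ℕ → ModuleCat.{0} R → ModuleCat.{0} R → Prop
  | 0, N, K => Nonempty ((K : Type) ≃ₗ[R] N)
  | d + 1, N, K => ∃ L : ModuleCat.{0} R, IsMinimalSyzygy1 R N L ∧ IsMinimalSyzygy R d L K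

/-- A module is indecomposable if it is nonzero and is not isomorphic to the direct sum of
two nonzero modules. -/
def IndecomposableModule (R : Type) [CommRing R] (M : Type) [AddCommGroup M] [Module R M] :
    Prop :=
  Nontrivial M ∧ ∀ (A B : Type) [AddCommGroup A] [Module R A] [AddCommGroup B] [Module R B],
    Nonempty (M ≃ₗ[R] A × B) → (Subsingleton A ∨ Subsingleton B)

/-!
Suppose some `a ∉ p` kills `Tor₁(K, L)` for all `K, L ∈ CM₀(R)`, and let `d = dim R`. For finitely
generated `M`, the truncation `M / 𝔪ᵏM` vanishes on the punctured spectrum, and since `R` is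
Cohen-Macaulay its `d`-th syzygy is maximal Cohen-Macaulay, hence lies in `CM₀(R)`. Dimension
shifting moves syzygies from one argument of `Tor` to the other without changing the annihilator of
`Tor₁`, and Krull's intersection theorem removes the truncations, so `a` kills
`Tor₁(R/p, Ω²ᵈ(R/p))`. Localizing at `p`, where `a` is a unit, `Ω²ᵈ(R/p)` becomes free, so the
residue field of `R_p` has finite projective dimension and `R_p` is regular by Serre's theorem.

For Serre's theorem, finite projective dimension of the residue field forces the socle of `R` to
vanish unless `𝔪 = 0`, so there is a nonzerodivisor `x ∈ 𝔪` outside `𝔪²`. The maximal ideal `𝔪 / xR`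
of `R / xR` is then a direct summand of `𝔪 / x𝔪`, so the residue field has finite projective
dimension over `R / xR`, and one inducts on the dimension.
-/

section TorOneAnnihilator

open TensorProduct

variable {R : Type*} [CommRing R]

theorem lTensor_rTensor_comm_apply {A B C D : Type*} [AddCommGroup A] [Module R A]
    [AddCommGroup B] [Module R B] [AddCommGroup C] [Module R C] [AddCommGroup D] [Module R D]
    (f : A →ₗ[R] B) (g : C →ₗ[R] D) (x : A ⊗[R] C) :
    g.lTensor B (f.rTensor C x) = f.rTensor D (g.lTensor A x) := by
  rw [← LinearMap.comp_apply, ← LinearMap.comp_apply, LinearMap.lTensor_comp_rTensor,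
    LinearMap.rTensor_comp_lTensor]

variable {F G M N : Type*} [AddCommGroup F] [Module R F] [AddCommGroup G] [Module R G]
  [AddCommGroup M] [Module R M] [AddCommGroup N] [Module R N]

theorem annihilator_ker_lTensor_le_annihilator_ker_rTensor [Module.Flat R F] {p : F →ₗ[R] N}
    {q : G →ₗ[R] M} (hp : Function.Surjective p) (hq : Function.Surjective q) :
    (LinearMap.ker ((LinearMap.ker p).subtype.lTensor M)).annihilator ≤
      (LinearMap.ker ((LinearMap.ker q).subtype.rTensor N)).annihilator := by
  refine fun a ha => Submodule.mem_annihilator.2 fun z hz => ?_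
  have hip := LinearMap.exact_subtype_ker_map p
  have hjq := LinearMap.exact_subtype_ker_map q
  obtain ⟨z, rfl⟩ := LinearMap.lTensor_surjective _ hp z
  obtain ⟨y, hy⟩ := (lTensor_exact G hip hp _).1
    ((lTensor_rTensor_comm_apply (LinearMap.ker q).subtype p z).trans hz)
  have hqy : (LinearMap.ker p).subtype.lTensor M (q.rTensor _ y) = 0 := by
    rw [lTensor_rTensor_comm_apply, hy]
    exact (rTensor_exact F hjq hq _).2 ⟨z, rfl⟩
  have haqy : q.rTensor _ (a • y) = 0 := by
    rw [map_smul, Submodule.mem_annihilator.1 ha _ hqy]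
  obtain ⟨w, hw⟩ := (rTensor_exact _ hjq hq _).1 haqy
  have hz_eq : a • z = (LinearMap.ker p).subtype.lTensor _ w := by
    apply Module.Flat.rTensor_preserves_injective_linearMap _ (Submodule.injective_subtype _)
    rw [← lTensor_rTensor_comm_apply, hw, map_smul, map_smul, hy]
  rw [← map_smul, hz_eq]
  exact (lTensor_exact _ hip hp _).2 ⟨w, rfl⟩

theorem annihilator_ker_lTensor_le_of_surjective [Module.Flat R F] {p : F →ₗ[R] N}
    {q : G →ₗ[R] M} (hp : Function.Surjective p) (hq : Function.Surjective q) :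
    (LinearMap.ker ((LinearMap.ker p).subtype.lTensor M)).annihilator ≤
      (LinearMap.ker ((LinearMap.ker q).subtype.lTensor N)).annihilator := by
  refine fun a ha => Submodule.mem_annihilator.2 fun z hz => ?_
  have hcomm : TensorProduct.comm R N _ z ∈
      LinearMap.ker ((LinearMap.ker q).subtype.rTensor N) := by
    rw [LinearMap.mem_ker, ← LinearMap.comm_comp_lTensor_comp_comm_eq]
    simp [LinearMap.mem_ker.1 hz]
  have := Submodule.mem_annihilator.1
    (annihilator_ker_lTensor_le_annihilator_ker_rTensor hp hq ha) _ hcomm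
  rwa [← map_smul, LinearEquiv.map_eq_zero_iff] at this

/-- The annihilator of `Tor₁(M, N)`, read off the canonical free cover of `N`: if `K` is the kernel
of `(N →₀ R) → N`, then `Tor₁(M, N)` is the kernel of `M ⊗ K → M ⊗ (N →₀ R)`. -/
def torOneAnnihilator (R : Type*) [CommRing R] (M N : Type*) [AddCommGroup M] [Module R M]
    [AddCommGroup N] [Module R N] : Ideal R :=
  (LinearMap.ker
    ((LinearMap.ker (Finsupp.linearCombination R (id : N → N))).subtype.lTensor M)).annihilator

theorem torOneAnnihilator_comm : torOneAnnihilator R M N = torOneAnnihilator R N M :=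
  le_antisymm
    (annihilator_ker_lTensor_le_of_surjective (Finsupp.linearCombination_id_surjective R N)
      (Finsupp.linearCombination_id_surjective R M))
    (annihilator_ker_lTensor_le_of_surjective (Finsupp.linearCombination_id_surjective R M)
      (Finsupp.linearCombination_id_surjective R N))

theorem torOneAnnihilator_eq_of_surjective [Module.Flat R F] {p : F →ₗ[R] N}
    (hp : Function.Surjective p) :
    torOneAnnihilator R M N =
      (LinearMap.ker ((LinearMap.ker p).subtype.lTensor M)).annihilator := by
  rw [torOneAnnihilator_comm]
  exact le_antisymm
    (annihilator_ker_lTensor_le_of_surjective (Finsupp.linearCombination_id_surjective R M) hp)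
    (annihilator_ker_lTensor_le_of_surjective hp (Finsupp.linearCombination_id_surjective R M))

theorem mem_torOneAnnihilator_iff [Module.Flat R F] {p : F →ₗ[R] N}
    (hp : Function.Surjective p) {a : R} :
    a ∈ torOneAnnihilator R M N ↔
      ∀ z : M ⊗[R] LinearMap.ker p, (LinearMap.ker p).subtype.lTensor M z = 0 → a • z = 0 := by
  rw [torOneAnnihilator_eq_of_surjective hp]
  exact Submodule.mem_annihilator

theorem annihilator_ker_lTensor_le_of_surjective_ker [Module.Flat R F] [Module.Flat R G]
    {F' : Type*} [AddCommGroup F'] [Module R F'] {p : F →ₗ[R] N} {q : G →ₗ[R] M}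
    {p' : F' →ₗ[R] LinearMap.ker p} (hq : Function.Surjective q)
    (hp' : Function.Surjective p') :
    (LinearMap.ker ((LinearMap.ker p).subtype.lTensor (LinearMap.ker q))).annihilator ≤
      (LinearMap.ker ((LinearMap.ker p').subtype.lTensor M)).annihilator := by
  refine fun a ha => Submodule.mem_annihilator.2 fun z hz => ?_
  have hip' := LinearMap.exact_subtype_ker_map p'
  have hjq := LinearMap.exact_subtype_ker_map q
  obtain ⟨z, rfl⟩ := LinearMap.rTensor_surjective _ hq z
  obtain ⟨y, hy⟩ := (rTensor_exact _ hjq hq _).1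
    ((lTensor_rTensor_comm_apply q (LinearMap.ker p').subtype z).symm.trans hz)
  have hp'y : (LinearMap.ker p).subtype.lTensor _ (p'.lTensor _ y) = 0 := by
    apply Module.Flat.rTensor_preserves_injective_linearMap _
      (Submodule.injective_subtype (LinearMap.ker q))
    rw [map_zero, ← lTensor_rTensor_comm_apply, ← lTensor_rTensor_comm_apply, hy,
      (lTensor_exact G hip' hp' _).2 ⟨z, rfl⟩, map_zero]
  have hap'y : p'.lTensor _ (a • y) = 0 := by
    rw [map_smul, Submodule.mem_annihilator.1 ha _ hp'y]
  obtain ⟨w, hw⟩ := (lTensor_exact _ hip' hp' _).1 hap'y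
  have hz_eq : a • z = (LinearMap.ker q).subtype.rTensor _ w := by
    apply Module.Flat.lTensor_preserves_injective_linearMap _
      (Submodule.injective_subtype (LinearMap.ker p'))
    rw [lTensor_rTensor_comm_apply, hw, map_smul, map_smul, hy]
  rw [← map_smul, hz_eq]
  exact (rTensor_exact _ hjq hq _).2 ⟨w, rfl⟩

theorem torOneAnnihilator_ker_le [Module.Flat R F] [Module.Flat R G] {p : F →ₗ[R] N}
    {q : G →ₗ[R] M} (hp : Function.Surjective p) (hq : Function.Surjective q) :
    torOneAnnihilator R (LinearMap.ker q) N ≤ torOneAnnihilator R M (LinearMap.ker p) := by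
  rw [torOneAnnihilator_eq_of_surjective hp]
  exact annihilator_ker_lTensor_le_of_surjective_ker hq
    (Finsupp.linearCombination_id_surjective R _)

theorem torOneAnnihilator_ker_left_eq_ker_right [Module.Flat R F] [Module.Flat R G]
    {p : F →ₗ[R] N} {q : G →ₗ[R] M} (hp : Function.Surjective p) (hq : Function.Surjective q) :
    torOneAnnihilator R (LinearMap.ker q) N = torOneAnnihilator R M (LinearMap.ker p) := by
  refine le_antisymm (torOneAnnihilator_ker_le hp hq) ?_
  rw [torOneAnnihilator_comm (M := M), torOneAnnihilator_comm (N := N)]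
  exact torOneAnnihilator_ker_le hq hp

theorem range_rTensor_smul_top_le (I : Ideal R) :
    LinearMap.range ((I • (⊤ : Submodule R M)).subtype.rTensor N) ≤
      I • (⊤ : Submodule R (M ⊗[R] N)) := by
  rw [LinearMap.range_eq_map, ← TensorProduct.span_tmul_eq_top, Submodule.map_span,
    Submodule.span_le]
  rintro _ ⟨_, ⟨⟨x, hx⟩, y, rfl⟩, rfl⟩
  rw [LinearMap.rTensor_tmul, Submodule.subtype_apply, SetLike.mem_coe]
  induction hx using Submodule.smul_induction_on' with
  | smul r hr m _ =>
    rw [← TensorProduct.smul_tmul']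
    exact Submodule.smul_mem_smul hr Submodule.mem_top
  | add x _ x' _ hx hx' =>
    rw [TensorProduct.add_tmul]
    exact Submodule.add_mem _ hx hx'

theorem iInf_torOneAnnihilator_quotient_pow_smul_le [IsNoetherianRing R] [Module.Finite R M]
    [Module.Finite R N] {I : Ideal R} (hI : I ≤ Ideal.jacobson ⊥) :
    ⨅ n : ℕ, torOneAnnihilator R (M ⧸ (I ^ n • ⊤ : Submodule R M)) N ≤
      torOneAnnihilator R M N := by
  intro a ha
  obtain ⟨m, p, hp⟩ := Module.Finite.exists_fin' R N
  refine (mem_torOneAnnihilator_iff hp).2 fun z hz => ?_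
  suffices a • z ∈ ⨅ n : ℕ, I ^ n • (⊤ : Submodule R (M ⊗[R] LinearMap.ker p)) by
    rwa [Ideal.iInf_pow_smul_eq_bot_of_le_jacobson _ hI, Submodule.mem_bot] at this
  refine Submodule.mem_iInf _ |>.2 fun n => range_rTensor_smul_top_le _ ?_
  refine (rTensor_exact (LinearMap.ker p) (LinearMap.exact_subtype_mkQ _)
    (Submodule.mkQ_surjective _) _).1 ?_
  rw [map_smul]
  refine (mem_torOneAnnihilator_iff hp).1 (Submodule.mem_iInf _ |>.1 ha n) _ ?_
  rw [lTensor_rTensor_comm_apply, hz, map_zero]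

theorem mem_torOneAnnihilator_of_comp_eq_zero {P₀ P₁ P₂ : Type*} [AddCommGroup P₀] [Module R P₀]
    [AddCommGroup P₁] [Module R P₁] [AddCommGroup P₂] [Module R P₂] [Module.Flat R P₀]
    {p : P₀ →ₗ[R] N} {d₁ : P₁ →ₗ[R] LinearMap.ker p} {d₂ : P₂ →ₗ[R] P₁}
    (hp : Function.Surjective p) (hd₁ : Function.Surjective d₁) (hd : d₁ ∘ₗ d₂ = 0) {a : R}
    (ha : ∀ y : M ⊗[R] P₁, ((LinearMap.ker p).subtype ∘ₗ d₁).lTensor M y = 0 →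
      ∃ w, d₂.lTensor M w = a • y) :
    a ∈ torOneAnnihilator R M N := by
  refine (mem_torOneAnnihilator_iff hp).2 fun z hz => ?_
  obtain ⟨y, rfl⟩ := LinearMap.lTensor_surjective M hd₁ z
  rw [← LinearMap.lTensor_comp_apply] at hz
  obtain ⟨w, hw⟩ := ha y hz
  rw [← map_smul, ← hw, ← LinearMap.lTensor_comp_apply, hd, LinearMap.lTensor_zero,
    LinearMap.zero_apply]

end TorOneAnnihilator

section TorObject

universe u

variable {R : Type u} [CommRing R]

theorem exists_f_eq_smul_of_mem_annihilator_homology (S : ShortComplex (ModuleCat.{u} R)) {a : R}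
    (ha : a ∈ Module.annihilator R S.homology) {y : S.X₂} (hy : S.g y = 0) :
    ∃ w, S.f w = a • y := by
  let z : S.moduleCatLeftHomologyData.K := ⟨y, hy⟩
  have hz : S.moduleCatHomologyIso.toLinearEquiv.symm
      (S.moduleCatLeftHomologyData.π (a • z)) = 0 := by
    rw [map_smul, map_smul, Module.mem_annihilator.1 ha]
  rw [LinearEquiv.map_eq_zero_iff] at hz
  obtain ⟨w, hw⟩ := (Submodule.Quotient.mk_eq_zero _).1 hz
  exact ⟨w, congrArg Subtype.val hw⟩

theorem annihilator_tor_one_le_torOneAnnihilator (M N : ModuleCat.{u} R) :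
    Module.annihilator R (((Tor (ModuleCat.{u} R) 1).obj M).obj N) ≤ torOneAnnihilator R M N := by
  intro a ha
  let P := projectiveResolution N
  let T := (MonoidalCategory.tensoringLeft (ModuleCat.{u} R)).obj M
  let C := (T.mapHomologicalComplex (ComplexShape.down ℕ)).obj P.complex
  have isoTor : ((Tor (ModuleCat.{u} R) 1).obj M).obj N ≅ (C.sc' 2 1 0).homology :=
    P.isoLeftDerivedObj T 1 ≪≫
      ShortComplex.homologyMapIso (C.isoSc' 2 1 0 (by simp) (by simp))
  have ha' : a ∈ Module.annihilator R (C.sc' 2 1 0).homology := by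
    rwa [← isoTor.toLinearEquiv.annihilator_eq]
  have : Module.Projective R (P.complex.X 0) :=
    (IsProjective.iff_projective (R := R) _).2 (P.projective 0)
  have hp : Function.Surjective (P.π.f 0).hom := (ModuleCat.epi_iff_surjective _).1 inferInstance
  have hexact : Function.Exact (P.complex.d 1 0).hom (P.π.f 0).hom :=
    (ShortComplex.ShortExact.moduleCat_exact_iff_function_exact _).1 P.exact₀
  refine mem_torOneAnnihilator_of_comp_eq_zero hp
    (d₁ := (P.complex.d 1 0).hom.codRestrict _ fun x => (hexact _).2 ⟨x, rfl⟩)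
    (d₂ := (P.complex.d 2 1).hom) (fun ⟨x, hx⟩ => ?_) (LinearMap.ext fun x => Subtype.ext ?_)
    fun y hy => exists_f_eq_smul_of_mem_annihilator_homology _ ha' hy
  · obtain ⟨y, hy⟩ := (hexact x).1 hx
    exact ⟨y, Subtype.ext hy⟩
  · exact LinearMap.congr_fun (congrArg ModuleCat.Hom.hom (P.complex.d_comp_d 2 1 0)) x

end TorObject

section LocalFreeness

open TensorProduct

variable {R : Type*} [CommRing R] {M : Type*} [AddCommGroup M] [Module R M]

theorem one_tmul_quotient_eq_zero_iff {I : Ideal R} {y : M} :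
    (1 : R ⧸ I) ⊗ₜ[R] y = 0 ↔ y ∈ I • (⊤ : Submodule R M) := by
  rw [← LinearMap.ker_tensorProductMk]
  rfl

theorem mk_mem_maximalIdeal_smul_top_iff (p : Ideal R) [p.IsPrime] {y : M} {s : p.primeCompl} :
    LocalizedModule.mk y s ∈ maximalIdeal (Localization.AtPrime p) •
        (⊤ : Submodule (Localization.AtPrime p) (LocalizedModule p.primeCompl M)) ↔
      ∃ t : p.primeCompl, t • y ∈ p • (⊤ : Submodule R M) := by
  rw [← Localization.AtPrime.map_eq_maximalIdeal,
    ← Ideal.localized'_eq_map (Localization.AtPrime p) p.primeCompl,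
    ← Submodule.localized'_top (Localization.AtPrime p) p.primeCompl
      (LocalizedModule.mkLinearMap p.primeCompl M),
    ← Submodule.localized'_smul, Submodule.mem_localized']
  simp only [← IsLocalizedModule.mk_eq_mk', LocalizedModule.mk_eq]
  constructor
  · rintro ⟨m, hm, s', u, hu⟩
    refine ⟨u * s', ?_⟩
    rw [mul_smul, ← hu, ← mul_smul]
    exact Submodule.smul_mem _ ((u * s : p.primeCompl) : R) hm
  · rintro ⟨t, ht⟩
    exact ⟨_, ht, t * s, 1, by rw [smul_smul s t y, mul_comm]⟩

theorem injective_lTensor_residueField_map_subtype_ker (p : Ideal R) [p.IsPrime] {F : Type*}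
    [AddCommGroup F] [Module R F] [Module.Flat R F] {g : F →ₗ[R] M} (hg : Function.Surjective g)
    (hp : ¬ torOneAnnihilator R (R ⧸ p) M ≤ p) :
    Function.Injective ((LocalizedModule.map p.primeCompl (LinearMap.ker g).subtype).lTensor
      (ResidueField (Localization.AtPrime p))) := by
  obtain ⟨a, ha, hap⟩ := SetLike.not_le_iff_exists.1 hp
  refine (injective_iff_map_eq_zero _).2 fun z hz => ?_
  obtain ⟨y, rfl⟩ := TensorProduct.mk_surjective _ _ _ Ideal.Quotient.mk_surjective z
  induction y using LocalizedModule.induction_on with | _ y s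
  rw [TensorProduct.mk_apply, LinearMap.lTensor_tmul, LocalizedModule.map_mk] at hz
  obtain ⟨t, ht⟩ := (mk_mem_maximalIdeal_smul_top_iff p).1 (one_tmul_quotient_eq_zero_iff.1 hz)
  have hker : (LinearMap.ker g).subtype.lTensor (R ⧸ p) (1 ⊗ₜ (t • y)) = 0 := by
    rw [LinearMap.lTensor_tmul]
    exact one_tmul_quotient_eq_zero_iff.2 ht
  have hay := (mem_torOneAnnihilator_iff hg).1 ha _ hker
  rw [← TensorProduct.tmul_smul, one_tmul_quotient_eq_zero_iff] at hay
  refine one_tmul_quotient_eq_zero_iff.2 ((mk_mem_maximalIdeal_smul_top_iff p).2 ?_)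
  exact ⟨⟨a, hap⟩ * t, by rwa [mul_smul]⟩

theorem free_localizedModule_of_not_torOneAnnihilator_le [IsNoetherianRing R] [Module.Finite R M]
    (p : Ideal R) [p.IsPrime] (hp : ¬ torOneAnnihilator R (R ⧸ p) M ≤ p) :
    Module.Free (Localization.AtPrime p) (LocalizedModule p.primeCompl M) := by
  obtain ⟨n, g, hg⟩ := Module.Finite.exists_fin' R M
  have : Module.FinitePresentation (Localization.AtPrime p) (LocalizedModule p.primeCompl M) :=
    Module.finitePresentation_of_finite _ _
  have : Module.Free (Localization.AtPrime p) (LocalizedModule p.primeCompl (Fin n → R)) :=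
    Module.free_of_isLocalizedModule p.primeCompl
      (LocalizedModule.mkLinearMap p.primeCompl (Fin n → R))
  exact Module.free_of_lTensor_residueField_injective _ _
    (LocalizedModule.map_surjective p.primeCompl g hg)
    (LocalizedModule.map_exact p.primeCompl _ _ (LinearMap.exact_subtype_ker_map g))
    (injective_lTensor_residueField_map_subtype_ker p hg hp)

end LocalFreeness

section ExtVanishing

open CategoryTheory.Abelian CategoryTheory.Limits

universe w v u

variable {C : Type u} [Category.{v} C] [Abelian C] [HasExt.{w} C] {n : ℕ}

theorem subsingleton_ext_of_iso_left {X X' : C} (Y : C) (e : X ≅ X')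
    [Subsingleton (Ext X' Y n)] : Subsingleton (Ext X Y n) :=
  let e' : Ext X' Y n ≃+ Ext X Y n :=
    (((extFunctor n).mapIso e.op).app Y).addCommGroupIsoToAddEquiv
  e'.symm.toEquiv.subsingleton

theorem subsingleton_ext_of_iso_right (X : C) {Y Y' : C} (e : Y ≅ Y')
    [Subsingleton (Ext X Y' n)] : Subsingleton (Ext X Y n) :=
  let e' : Ext X Y n ≃+ Ext X Y' n := ((extFunctorObj X n).mapIso e).addCommGroupIsoToAddEquiv
  e'.toEquiv.subsingleton

theorem subsingleton_ext_of_isZero_right (X : C) {Y : C} (hY : IsZero Y) :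
    Subsingleton (Ext X Y n) :=
  subsingleton_of_forall_eq 0 fun x => by
    rw [← x.comp_mk₀_id, hY.eq_of_src (𝟙 Y) 0, Ext.mk₀_zero, Ext.comp_zero]

theorem subsingleton_ext_X₂_left {S : ShortComplex C} (hS : S.ShortExact) (Y : C)
    [Subsingleton (Ext S.X₁ Y n)] [Subsingleton (Ext S.X₃ Y n)] :
    Subsingleton (Ext S.X₂ Y n) :=
  subsingleton_of_forall_eq 0 fun x => by
    obtain ⟨y, hy⟩ := Ext.contravariant_sequence_exact₂ hS Y x (Subsingleton.elim _ _)
    rw [← hy, Subsingleton.elim y 0, Ext.comp_zero]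

theorem subsingleton_ext_X₁_right {S : ShortComplex C} (hS : S.ShortExact) (X : C)
    (h₂ : Subsingleton (Ext X S.X₂ n)) (h₃ : ∀ m, m + 1 = n → Subsingleton (Ext X S.X₃ m)) :
    Subsingleton (Ext X S.X₁ n) :=
  subsingleton_of_forall_eq 0 fun x => by
    cases n with
    | zero =>
      have := hS.mono_f
      exact Ext.postcomp_mk₀_injective_of_mono X S.f (Subsingleton.elim _ _)
    | succ n =>
      have := h₃ n rfl
      obtain ⟨y, hy⟩ := Ext.covariant_sequence_exact₁ X hS x (Subsingleton.elim _ _) rfl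
      rw [← hy, Subsingleton.elim y 0, Ext.zero_comp]

theorem subsingleton_ext_pi {R : Type u} [CommRing R] (X : ModuleCat.{u} R) {ι : Type}
    [Finite ι] (Y : ι → ModuleCat.{u} R) (h : ∀ i, Subsingleton (Abelian.Ext.{u} X (Y i) n)) :
    Subsingleton (Abelian.Ext.{u} X (ModuleCat.of R (∀ i, Y i)) n) := by
  have := Fintype.ofFinite ι
  have : Subsingleton (Abelian.Ext.{u} X (⨁ Y) n) :=
    (Ext.addEquivBiproduct X (biproduct.isBilimit Y) n).toEquiv.subsingleton
  exact subsingleton_ext_of_iso_right X (ModuleCat.biproductIsoPi Y).symm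

end ExtVanishing

section ExtMod

variable {R : Type} [CommRing R] (X Y : ModuleCat.{0} R)

theorem subsingleton_extMod_iff_exactAt (P : ProjectiveResolution X) (n : ℕ) :
    Subsingleton (ExtMod R n X Y) ↔ (P.complex.linearYonedaObj R Y).ExactAt n := by
  have e : ExtMod R n X Y ≅ (P.complex.linearYonedaObj R Y).homology n := P.isoExt n Y
  rw [HomologicalComplex.exactAt_iff_isZero_homology, ← ModuleCat.isZero_iff_subsingleton,
    e.isZero_iff]

theorem exactAt_linearYonedaObj_zero_iff (P : ProjectiveResolution X) :
    (P.complex.linearYonedaObj R Y).ExactAt 0 ↔ ∀ f : X ⟶ Y, f = 0 := by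
  let C := P.complex.linearYonedaObj R Y
  let π : P.complex.X 0 ⟶ X := P.π.f 0
  have hπ : P.complex.d 1 0 ≫ π = 0 := P.complex_d_comp_π_f_zero
  have : Epi π := inferInstanceAs (Epi (P.π.f 0))
  rw [HomologicalComplex.exactAt_iff' C 0 0 1 (by simp) (by simp),
    ShortComplex.moduleCat_exact_iff]
  constructor
  · intro h f
    obtain ⟨x, hx⟩ := h (π ≫ f : P.complex.X 0 ⟶ Y) (by
      change P.complex.d 1 0 ≫ π ≫ f = 0
      rw [← Category.assoc, hπ, Limits.zero_comp])
    have hd : C.d 0 0 = 0 := C.shape _ _ (by simp)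
    rw [← cancel_epi π, Limits.comp_zero, ← hx]
    exact congrArg (fun d => d.hom x) hd
  · intro h x hx
    have hdesc : π ≫ P.exact₀.desc (x : P.complex.X 0 ⟶ Y) hx = (x : P.complex.X 0 ⟶ Y) :=
      P.exact₀.g_desc _ hx
    rw [h (P.exact₀.desc (x : P.complex.X 0 ⟶ Y) hx), Limits.comp_zero] at hdesc
    exact ⟨0, (map_zero _).trans hdesc⟩

theorem exactAt_linearYonedaObj_succ_iff (P : ProjectiveResolution X) (n : ℕ) :
    (P.complex.linearYonedaObj R Y).ExactAt (n + 1) ↔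
      ∀ f : Abelian.Ext.{0} X Y (n + 1), f = 0 := by
  rw [HomologicalComplex.exactAt_iff' _ n (n + 1) (n + 2) (by simp) (by simp),
    ShortComplex.moduleCat_exact_iff]
  constructor
  · intro h f
    obtain ⟨f, hf, rfl⟩ := P.extMk_surjective f (n + 2) rfl
    exact (P.extMk_eq_zero_iff f (n + 2) rfl hf n rfl).2 (h f hf)
  · exact fun h x hx => (P.extMk_eq_zero_iff x (n + 2) rfl hx n rfl).1 (h _)

theorem subsingleton_extMod_iff (n : ℕ) :
    Subsingleton (ExtMod R n X Y) ↔ Subsingleton (Abelian.Ext.{0} X Y n) := by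
  rw [subsingleton_extMod_iff_exactAt X Y (projectiveResolution X)]
  cases n with
  | zero =>
    rw [Abelian.Ext.homEquiv₀.subsingleton_congr, exactAt_linearYonedaObj_zero_iff]
    exact (subsingleton_iff_forall_eq 0).symm
  | succ n =>
    rw [exactAt_linearYonedaObj_succ_iff]
    exact (subsingleton_iff_forall_eq 0).symm

theorem natCast_le_moduleDepth_iff [IsLocalRing R] {N : Type} [AddCommGroup N] [Module R N]
    {d : ℕ} :
    (d : ℕ∞) ≤ moduleDepth R N ↔ ∀ i < d, Subsingleton
      (Abelian.Ext.{0} (ModuleCat.of R (ResidueField R)) (ModuleCat.of R N) i) := by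
  simp only [moduleDepth, ← subsingleton_extMod_iff, le_sInf_iff]
  constructor
  · intro h i hi
    by_contra hns
    exact hi.not_ge (Nat.cast_le.1 (h i ⟨i, rfl, not_subsingleton_iff_nontrivial.1 hns⟩))
  · rintro h _ ⟨i, rfl, hi⟩
    by_contra hdi
    exact not_subsingleton_iff_nontrivial.2 hi (h i (Nat.cast_lt.1 (not_le.1 hdi)))

end ExtMod

section Ischebeck

open CategoryTheory.Abelian

universe u

variable {R : Type u} [CommRing R]

theorem support_quotient_eq_zeroLocus (I : Ideal R) :
    Module.support R (R ⧸ I) = PrimeSpectrum.zeroLocus I := by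
  rw [Module.support_eq_zeroLocus, Ideal.annihilator_quotient]

variable [IsNoetherianRing R]

theorem subsingleton_ext_of_forall_mem_support (M : ModuleCat.{u} R) {n : ℕ} {N : Type u}
    [AddCommGroup N] [Module R N] [hN : Module.Finite R N]
    (h : ∀ q ∈ Module.support R N, Subsingleton (Ext.{u} (ModuleCat.of R (R ⧸ q.asIdeal)) M n)) :
    Subsingleton (Ext.{u} (ModuleCat.of R N) M n) := by
  induction hN using IsNoetherianRing.induction_on_isQuotientEquivQuotientPrime R with
  | subsingleton N =>
    have := (ModuleCat.isZero_of_subsingleton (ModuleCat.of R N)).hasProjectiveDimensionLT_zero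
    exact HasProjectiveDimensionLT.subsingleton (ModuleCat.of R N) 0 n n.zero_le _
  | quotient N q e =>
    have := h q (by simp [e.support_eq, support_quotient_eq_zeroLocus])
    exact subsingleton_ext_of_iso_left _ e.toModuleIso
  | exact N₁ N₂ N₃ f g hf hg hfg h₁ h₃ =>
    rw [Module.support_of_exact hfg hf hg] at h
    have := h₁ fun q hq => h q (Or.inl hq)
    have := h₃ fun q hq => h q (Or.inr hq)
    exact subsingleton_ext_X₂_left
      (ModuleCat.shortComplex_shortExact (ModuleCat.shortComplexOfCompEqZero f g
        hfg.linearMap_comp_eq_zero) hfg hf hg) M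

variable [IsLocalRing R]

theorem subsingleton_ext_of_subsingleton_ext_quotSMulTop (M : ModuleCat.{u} R) [Module.Finite R M]
    {n : ℕ} {N : Type u} [AddCommGroup N] [Module R N] [Module.Finite R N] {x : R}
    (hx : x ∈ maximalIdeal R) (hreg : IsSMulRegular N x)
    [Subsingleton (Ext.{u} (ModuleCat.of R (QuotSMulTop x N)) M (n + 1))] :
    Subsingleton (Ext.{u} (ModuleCat.of R N) M n) := by
  have hS := IsSMulRegular.smulShortComplex_shortExact (M := ModuleCat.of R N) hreg
  by_contra hns
  have : Nontrivial (Ext.{u} (ModuleCat.of R N) M n) := not_subsingleton_iff_nontrivial.1 hns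
  refine Submodule.top_ne_pointwise_smul_of_mem_jacobson_annihilator
    (maximalIdeal_le_jacobson (Module.annihilator R (Ext.{u} (ModuleCat.of R N) M n)) hx) ?_
  refine (eq_top_iff.2 fun y _ => ?_).symm
  obtain ⟨z, hz⟩ := Ext.contravariant_sequence_exact₁ hS M y (add_comm 1 n)
    (Subsingleton.elim (α := Ext.{u} (ModuleCat.of R (QuotSMulTop x N)) M (n + 1)) _ _)
  have hsmul (z : Ext.{u} (ModuleCat.of R N) M n) :
      (Ext.mk₀ (x • 𝟙 (ModuleCat.of R N))).comp z (zero_add n) = x • z := by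
    rw [Ext.mk₀_smul, Ext.smul_comp, Ext.mk₀_id_comp]
  rw [hz.symm.trans (hsmul z)]
  exact Submodule.smul_mem_pointwise_smul _ _ ⊤ Submodule.mem_top

-- Ischebeck's theorem for cyclic modules: `Ext ^ i (R ⧸ q, M) = 0` for `i < depth M - dim R ⧸ q`.
theorem subsingleton_ext_quotient_of_coheight_lt (M : ModuleCat.{u} R) [Module.Finite R M] {t : ℕ}
    (ht : ∀ i < t, Subsingleton (Ext.{u} (ModuleCat.of R (ResidueField R)) M i)) {n : ℕ} :
    ∀ {q : PrimeSpectrum R}, Order.coheight q < n → ∀ {i : ℕ}, i + n ≤ t →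
      Subsingleton (Ext.{u} (ModuleCat.of R (R ⧸ q.asIdeal)) M i) := by
  induction n with
  | zero => simp
  | succ n ih =>
    intro q hq i hi
    by_cases hqm : maximalIdeal R ≤ q.asIdeal
    · rw [← (le_maximalIdeal q.2.ne_top).antisymm' hqm]
      exact ht i (by omega)
    obtain ⟨x, hxm, hxq⟩ := SetLike.not_le_iff_exists.1 hqm
    have hreg : IsSMulRegular (R ⧸ q.asIdeal) x := fun a b hab =>
      mul_left_cancel₀ (Ideal.Quotient.eq_zero_iff_mem.not.2 hxq) hab
    have hsupp : ∀ q' ∈ Module.support R (QuotSMulTop x (R ⧸ q.asIdeal)), q < q' := by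
      intro q' hq'
      rw [Module.support_quotSMulTop, support_quotient_eq_zeroLocus] at hq'
      refine lt_of_le_of_ne hq'.1 ?_
      rintro rfl
      exact hxq (by simpa using hq'.2)
    have : Subsingleton (Ext.{u} (ModuleCat.of R (QuotSMulTop x (R ⧸ q.asIdeal))) M (i + 1)) :=
      subsingleton_ext_of_forall_mem_support M fun q' hq' =>
        ih ((Order.coheight_strictAnti (hsupp q' hq') (Order.coheight_lt_top q')).trans_le
          (Order.le_of_lt_add_one hq)) (by omega)
    exact subsingleton_ext_of_subsingleton_ext_quotSMulTop M hxm hreg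

end Ischebeck

section Depth

open CategoryTheory.Abelian

theorem smul_top_lt_top_of_le_maximalIdeal {R : Type*} [CommRing R] [IsLocalRing R] {M : Type*}
    [AddCommGroup M] [Module R M] [Module.Finite R M] [Nontrivial M] {I : Ideal R}
    (hI : I ≤ maximalIdeal R) : I • (⊤ : Submodule R M) < ⊤ :=
  lt_top_iff_ne_top.2 (Submodule.top_ne_ideal_smul_of_le_jacobson_annihilator
    (hI.trans (maximalIdeal_le_jacobson _))).symm

theorem moduleDepth_eq_top_of_subsingleton {R : Type} [CommRing R] [IsLocalRing R] {M : Type}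
    [AddCommGroup M] [Module R M] [Subsingleton M] : moduleDepth R M = ⊤ :=
  ENat.eq_top_iff_forall_ge.2 fun _ => natCast_le_moduleDepth_iff.2 fun _ _ =>
    subsingleton_ext_of_isZero_right _ (ModuleCat.isZero_of_subsingleton (ModuleCat.of R M))

variable {R : Type} [CommRing R] [IsNoetherianRing R] [IsLocalRing R] {M : Type} [AddCommGroup M]
  [Module R M] [Module.Finite R M]

theorem exists_isRegular_of_add_coheight_le_moduleDepth [Nontrivial M] {q : PrimeSpectrum R}
    {b : ℕ} (hb : b + Order.coheight q ≤ moduleDepth R M) :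
    ∃ rs : List R, rs.length = b ∧ (∀ r ∈ rs, r ∈ q.asIdeal) ∧
      RingTheory.Sequence.IsRegular M rs := by
  obtain ⟨c, hc⟩ := ENat.ne_top_iff_exists.1 (Order.coheight_lt_top q).ne
  rw [← hc, ← Nat.cast_add, natCast_le_moduleDepth_iff] at hb
  refine ModuleCat.exists_isRegular_of_exists_subsingleton_ext q.asIdeal b (ModuleCat.of R M)
    (smul_top_lt_top_of_le_maximalIdeal (le_maximalIdeal q.2.ne_top))
    (ModuleCat.of R (R ⧸ q.asIdeal)) (support_quotient_eq_zeroLocus _) fun i hi => ?_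
  refine subsingleton_ext_quotient_of_coheight_lt (ModuleCat.of R M) hb (n := c + 1) ?_ (by omega)
  exact hc ▸ Nat.cast_lt.2 c.lt_succ_self

theorem length_le_moduleDepth_of_isRegular [Nontrivial M] {rs : List R}
    (hmem : ∀ r ∈ rs, r ∈ maximalIdeal R) (hreg : RingTheory.Sequence.IsRegular M rs) :
    rs.length ≤ moduleDepth R M :=
  natCast_le_moduleDepth_iff.2 <| ModuleCat.subsingleton_ext_of_exists_isRegular (maximalIdeal R)
    (ModuleCat.of R (ResidueField R)) (support_quotient_eq_zeroLocus _).le (ModuleCat.of R M)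
    (smul_top_lt_top_of_le_maximalIdeal le_rfl) rs hmem hreg

theorem natCast_le_moduleDepth_localizedModule (q : PrimeSpectrum R) {b : ℕ}
    (hb : b + Order.coheight q ≤ moduleDepth R M) :
    b ≤ moduleDepth (Localization.AtPrime q.asIdeal) (LocalizedModule q.asIdeal.primeCompl M) := by
  cases subsingleton_or_nontrivial (LocalizedModule q.asIdeal.primeCompl M) with
  | inl _ => exact le_top.trans moduleDepth_eq_top_of_subsingleton.ge
  | inr _ =>
    have : Nontrivial M := by
      by_contra hM
      rw [not_nontrivial_iff_subsingleton] at hM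
      exact not_subsingleton (LocalizedModule q.asIdeal.primeCompl M) inferInstance
    obtain ⟨rs, rfl, hmem, hreg⟩ := exists_isRegular_of_add_coheight_le_moduleDepth hb
    rw [← List.length_map (algebraMap R (Localization.AtPrime q.asIdeal))]
    refine length_le_moduleDepth_of_isRegular (fun r hr => ?_)
      (hreg.1.isRegular_of_isLocalizedModule_of_mem (Localization.AtPrime q.asIdeal) q.asIdeal
        (LocalizedModule.mkLinearMap q.asIdeal.primeCompl M) hmem)
    obtain ⟨s, hs, rfl⟩ := List.mem_map.1 hr
    exact (IsLocalization.AtPrime.to_map_mem_maximal_iff _ q.asIdeal s).2 (hmem s hs)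

theorem isMCMModule_of_ringKrullDim_le_moduleDepth (h : ringKrullDim R ≤ moduleDepth R M) :
    IsMCMModule R M := by
  intro q hq
  let q' : PrimeSpectrum R := ⟨q, hq⟩
  obtain ⟨b, hb⟩ := ENat.ne_top_iff_exists.1 q.height_ne_top_of_isPrime
  rw [IsLocalization.AtPrime.ringKrullDim_eq_height q, WithBot.coe_le_coe, ← hb]
  refine natCast_le_moduleDepth_localizedModule q' ?_
  rw [hb, PrimeSpectrum.height_eq_orderHeight q']
  rw [ringKrullDim, Order.krullDim_eq_iSup_height_add_coheight_of_nonempty,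
    WithBot.coe_le_coe] at h
  exact (le_iSup (fun a : PrimeSpectrum R => Order.height a + Order.coheight a) q').trans h

end Depth

section ProjectiveDimension

universe u

variable {R : Type u} [CommRing R] {M : Type u} [AddCommGroup M] [Module R M]

theorem free_iff_hasProjectiveDimensionLT_one [IsNoetherianRing R] [IsLocalRing R]
    [Module.Finite R M] :
    Module.Free R M ↔ HasProjectiveDimensionLT (ModuleCat.of R M) 1 := by
  rw [← projective_iff_hasProjectiveDimensionLT_one, ← IsProjective.iff_projective]
  exact ⟨fun _ => inferInstance, fun _ => Module.free_of_flat_of_isLocalRing⟩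

theorem hasProjectiveDimensionLT_add_two_iff_of_exact {P K : Type u} [AddCommGroup P] [Module R P]
    [Module.Projective R P] [AddCommGroup K] [Module R K] {i : K →ₗ[R] P} {g : P →ₗ[R] M}
    (hi : Function.Injective i) (hg : Function.Surjective g) (hig : Function.Exact i g) (n : ℕ) :
    HasProjectiveDimensionLT (ModuleCat.of R M) (n + 2) ↔
      HasProjectiveDimensionLT (ModuleCat.of R K) (n + 1) :=
  (ModuleCat.shortComplex_shortExact (ModuleCat.shortComplexOfCompEqZero i g
    hig.linearMap_comp_eq_zero) hig hi hg).hasProjectiveDimensionLT_X₃_iff n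
      (inferInstanceAs (Projective (ModuleCat.of R P)))

end ProjectiveDimension

section Syzygy

universe u

variable {R : Type u} [CommRing R] [IsNoetherianRing R]

/-- A first syzygy `Ω M` of `M`: the kernel of a chosen (not necessarily minimal) surjection
`Rⁿ → M`. Higher syzygies are the iterates `syzygy^[n] M`. -/
def syzygy (M : FGModuleCat.{u} R) : FGModuleCat.{u} R :=
  FGModuleCat.of R (LinearMap.ker (Module.Finite.exists_fin' R M).choose_spec.choose)

theorem exists_syzygy_eq_ker (M : FGModuleCat.{u} R) :
    ∃ (n : ℕ) (g : (Fin n → R) →ₗ[R] M), Function.Surjective g ∧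
      syzygy M = FGModuleCat.of R (LinearMap.ker g) :=
  ⟨_, _, (Module.Finite.exists_fin' R M).choose_spec.choose_spec, rfl⟩

theorem torOneAnnihilator_syzygy_left (M N : FGModuleCat.{u} R) :
    torOneAnnihilator R (syzygy M) N = torOneAnnihilator R M (syzygy N) := by
  obtain ⟨_, g, hg, hM⟩ := exists_syzygy_eq_ker M
  obtain ⟨_, f, hf, hN⟩ := exists_syzygy_eq_ker N
  rw [hM, hN]
  exact torOneAnnihilator_ker_left_eq_ker_right hf hg

theorem torOneAnnihilator_iterate_syzygy_left (n : ℕ) (M N : FGModuleCat.{u} R) :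
    torOneAnnihilator R ↑(syzygy^[n] M) N = torOneAnnihilator R M ↑(syzygy^[n] N) := by
  induction n generalizing N with
  | zero => rfl
  | succ n ih =>
    rw [Function.iterate_succ_apply', Function.iterate_succ_apply, torOneAnnihilator_syzygy_left,
      ih]

theorem hasProjectiveDimensionLT_localizedModule_iterate_syzygy_iff (q : Ideal R) [q.IsPrime]
    (k n : ℕ) (M : FGModuleCat.{u} R) :
    HasProjectiveDimensionLT (ModuleCat.of (Localization.AtPrime q)
        (LocalizedModule q.primeCompl ↑(syzygy^[k] M))) (n + 1) ↔
      HasProjectiveDimensionLT (ModuleCat.of (Localization.AtPrime q)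
        (LocalizedModule q.primeCompl M)) (n + k + 1) := by
  induction k generalizing M with
  | zero => rfl
  | succ k ih =>
    obtain ⟨m, g, hg, hM⟩ := exists_syzygy_eq_ker M
    have : Module.Free (Localization.AtPrime q) (LocalizedModule q.primeCompl (Fin m → R)) :=
      Module.free_of_isLocalizedModule q.primeCompl
        (LocalizedModule.mkLinearMap q.primeCompl (Fin m → R))
    rw [Function.iterate_succ_apply, ih, hM]
    exact (hasProjectiveDimensionLT_add_two_iff_of_exact
      (LocalizedModule.map_injective q.primeCompl _ (LinearMap.ker g).injective_subtype)
      (LocalizedModule.map_surjective q.primeCompl g hg)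
      (LocalizedModule.map_exact q.primeCompl _ _ (LinearMap.exact_subtype_ker_map g)) _).symm

theorem free_localizedModule_iterate_syzygy_iff (q : Ideal R) [q.IsPrime] (k : ℕ)
    (M : FGModuleCat.{u} R) :
    Module.Free (Localization.AtPrime q) (LocalizedModule q.primeCompl ↑(syzygy^[k] M)) ↔
      HasProjectiveDimensionLT (ModuleCat.of (Localization.AtPrime q)
        (LocalizedModule q.primeCompl M)) (k + 1) := by
  rw [free_iff_hasProjectiveDimensionLT_one, ← zero_add 1,
    hasProjectiveDimensionLT_localizedModule_iterate_syzygy_iff, zero_add]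

theorem subsingleton_ext_iterate_syzygy (X : ModuleCat.{u} R) (M : FGModuleCat.{u} R) {i n : ℕ}
    (hin : i < n) (hR : ∀ j ≤ i, Subsingleton (Abelian.Ext.{u} X (ModuleCat.of R R) j)) :
    Subsingleton (Abelian.Ext.{u} X (syzygy^[n] M).obj i) := by
  induction n generalizing i with
  | zero => omega
  | succ n ih =>
    obtain ⟨m, g, hg, hM⟩ := exists_syzygy_eq_ker (syzygy^[n] M)
    rw [Function.iterate_succ_apply', hM]
    exact subsingleton_ext_X₁_right (LinearMap.shortExact_shortComplexKer hg) X
      (subsingleton_ext_pi X (fun _ : Fin m => ModuleCat.of R R) fun _ => hR i le_rfl)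
      fun j hj => ih (by omega) fun l hl => hR l (by omega)

end Syzygy

section Truncation

universe u

variable {R : Type u} [CommRing R] [IsLocalRing R]

/-- The truncation `M / 𝔪ᵏ M`, approximating `M` in the `𝔪`-adic topology by a module supported at
the closed point. -/
def truncation (M : FGModuleCat.{u} R) (k : ℕ) : FGModuleCat.{u} R :=
  FGModuleCat.of R (M ⧸ (maximalIdeal R ^ k • (⊤ : Submodule R M)))

theorem subsingleton_localizedModule_truncation (M : FGModuleCat.{u} R) (k : ℕ) {q : Ideal R}
    [hq : q.IsPrime] (hqm : q ≠ maximalIdeal R) :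
    Subsingleton (LocalizedModule q.primeCompl (truncation M k)) := by
  obtain ⟨x, hxm, hxq⟩ := SetLike.not_le_iff_exists.1 fun h : maximalIdeal R ≤ q =>
    hqm (le_antisymm (le_maximalIdeal hq.ne_top) h)
  refine LocalizedModule.subsingleton_iff.2 fun y =>
    ⟨x ^ k, fun h => hxq (hq.mem_of_pow_mem k h), ?_⟩
  obtain ⟨y, rfl⟩ := Submodule.mkQ_surjective _ y
  exact (Submodule.Quotient.mk_eq_zero _).2
    (Submodule.smul_mem_smul (Ideal.pow_mem_pow hxm k) trivial)

variable [IsNoetherianRing R]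

theorem iInf_torOneAnnihilator_truncation_le (M N : FGModuleCat.{u} R) :
    ⨅ k, torOneAnnihilator R (truncation M k) N ≤ torOneAnnihilator R M N :=
  iInf_torOneAnnihilator_quotient_pow_smul_le (maximalIdeal_le_jacobson ⊥)

theorem iInf_torOneAnnihilator_iterate_syzygy_truncation_le (d : ℕ) (M N : FGModuleCat.{u} R) :
    ⨅ (k) (l), torOneAnnihilator R ↑(syzygy^[d] (truncation M k)) ↑(syzygy^[d] (truncation N l)) ≤
      torOneAnnihilator R N ↑(syzygy^[d] (syzygy^[d] M)) := by
  rw [iInf_comm]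
  refine le_trans (iInf_mono fun l => ?_) (iInf_torOneAnnihilator_truncation_le N _)
  calc ⨅ k, torOneAnnihilator R ↑(syzygy^[d] (truncation M k)) ↑(syzygy^[d] (truncation N l))
      = ⨅ k, torOneAnnihilator R (truncation M k) ↑(syzygy^[d] (syzygy^[d] (truncation N l))) :=
        iInf_congr fun k => torOneAnnihilator_iterate_syzygy_left d _ _
    _ ≤ torOneAnnihilator R M ↑(syzygy^[d] (syzygy^[d] (truncation N l))) :=
        iInf_torOneAnnihilator_truncation_le M _
    _ = torOneAnnihilator R (truncation N l) ↑(syzygy^[d] (syzygy^[d] M)) := by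
        rw [torOneAnnihilator_comm, torOneAnnihilator_iterate_syzygy_left,
          torOneAnnihilator_iterate_syzygy_left]

theorem memCM0_iterate_syzygy_truncation {R : Type} [CommRing R] [IsLocalRing R]
    [IsNoetherianRing R] (hCM : IsCMLocalRing R) {d : ℕ} (hd : ringKrullDim R = d)
    (M : FGModuleCat.{0} R) (k : ℕ) :
    MemCM0 R (syzygy^[d] (truncation M k)).obj := by
  refine ⟨(syzygy^[d] (truncation M k)).property, ?_, fun q _ hq => ?_⟩
  · have hR : (d : ℕ∞) ≤ moduleDepth R R :=
      WithBot.coe_le_coe.1 ((hCM.trans hd).ge)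
    have hsyz : (d : ℕ∞) ≤ moduleDepth R (syzygy^[d] (truncation M k)) :=
      natCast_le_moduleDepth_iff.2 fun i hi =>
        subsingleton_ext_iterate_syzygy _ _ hi fun j hj =>
          natCast_le_moduleDepth_iff.1 hR j (hj.trans_lt hi)
    exact isMCMModule_of_ringKrullDim_le_moduleDepth (hd ▸ WithBot.coe_le_coe.2 hsyz)
  · have := subsingleton_localizedModule_truncation M k hq
    have : HasProjectiveDimensionLT (ModuleCat.of (Localization.AtPrime q)
        (LocalizedModule q.primeCompl (truncation M k))) 1 :=
      free_iff_hasProjectiveDimensionLT_one.1 inferInstance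
    exact (free_localizedModule_iterate_syzygy_iff q d _).2
      (hasProjectiveDimensionLT_of_ge _ 1 _ (by omega))

end Truncation

section Socle

open TensorProduct

universe u

variable {R : Type u} [CommRing R] [IsLocalRing R]

theorem exists_surjective_forall_mem_ker_apply_mem_maximalIdeal (M : Type*) [AddCommGroup M]
    [Module R M] [Module.Finite R M] :
    ∃ (n : ℕ) (g : (Fin n → R) →ₗ[R] M), Function.Surjective g ∧
      ∀ y ∈ LinearMap.ker g, ∀ i, y i ∈ maximalIdeal R := by
  let w := Module.finBasis (ResidueField R) (ResidueField R ⊗[R] M)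
  obtain ⟨v, hv⟩ := (TensorProduct.mk_surjective R M (ResidueField R)
    Ideal.Quotient.mk_surjective).comp_left w
  have hvw : ∀ i, (1 : ResidueField R) ⊗ₜ[R] v i = w i := congr_fun hv
  refine ⟨_, Fintype.linearCombination R v, ?_, fun y hy i => ?_⟩
  · rw [← LinearMap.range_eq_top, Fintype.range_linearCombination]
    exact IsLocalRing.span_eq_top_of_tmul_eq_basis v w hvw
  · have hrel : ∑ i, residue R (y i) • w i = 0 := by
      have := congrArg (fun m => (1 : ResidueField R) ⊗ₜ[R] m) hy
      simp only [Fintype.linearCombination_apply, TensorProduct.tmul_sum,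
        TensorProduct.tmul_smul, hvw, TensorProduct.tmul_zero] at this
      exact this
    exact (residue_eq_zero_iff _).1 (Fintype.linearIndependent_iff.1 w.linearIndependent _ hrel i)

theorem subsingleton_of_free_of_smul_eq_zero {S M : Type*} [CommRing S] [AddCommGroup M]
    [Module S M] [Module.Free S M] {z : S} (hz : z ≠ 0) (h : ∀ y : M, z • y = 0) :
    Subsingleton M := by
  by_contra hM
  rw [not_subsingleton_iff_nontrivial] at hM
  exact hz (FaithfulSMul.eq_of_smul_eq_smul fun y : M => by rw [h, zero_smul])

-- Over a ring with nonzero socle, a nonzero submodule of `𝔪 Rⁿ` is never free, so a minimal free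
-- resolution cannot end in a nonzero syzygy.
theorem free_of_hasProjectiveDimensionLE_of_annihilator_ne_bot [IsNoetherianRing R]
    (hR : (maximalIdeal R).annihilator ≠ ⊥) (n : ℕ) (M : Type u) [AddCommGroup M] [Module R M]
    [Module.Finite R M] (h : HasProjectiveDimensionLE (ModuleCat.of R M) n) :
    Module.Free R M := by
  induction n generalizing M with
  | zero => exact free_iff_hasProjectiveDimensionLT_one.2 h
  | succ n ih =>
    obtain ⟨z, hz, hz0⟩ := Submodule.exists_mem_ne_zero_of_ne_bot hR
    obtain ⟨k, g, hg, hmin⟩ := exists_surjective_forall_mem_ker_apply_mem_maximalIdeal (R := R) M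
    have : Module.Free R (LinearMap.ker g) :=
      ih _ ((hasProjectiveDimensionLT_add_two_iff_of_exact (LinearMap.ker g).injective_subtype hg
        (LinearMap.exact_subtype_ker_map g) n).1 h)
    have : Subsingleton (LinearMap.ker g) :=
      subsingleton_of_free_of_smul_eq_zero hz0 fun y => Subtype.ext <| funext fun i =>
        Submodule.mem_annihilator.1 hz _ (hmin y y.2 i)
    have hinj : Function.Injective g :=
      LinearMap.ker_eq_bot.1 ((LinearMap.ker g).subsingleton_iff_eq_bot.1 this)
    exact Module.Free.of_equiv (LinearEquiv.ofBijective g ⟨hinj, hg⟩)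

theorem annihilator_maximalIdeal_eq_bot [IsNoetherianRing R] (h0 : maximalIdeal R ≠ ⊥) {n : ℕ}
    (h : HasProjectiveDimensionLE (ModuleCat.of R (ResidueField R)) n) :
    (maximalIdeal R).annihilator = ⊥ := by
  by_contra hR
  obtain ⟨r, hr, hr0⟩ := Submodule.exists_mem_ne_zero_of_ne_bot h0
  have := free_of_hasProjectiveDimensionLE_of_annihilator_ne_bot hR n (ResidueField R) h
  refine not_subsingleton (ResidueField R)
    (subsingleton_of_free_of_smul_eq_zero (S := R) hr0 fun y => ?_)
  rw [Algebra.smul_def, ResidueField.algebraMap_eq, (residue_eq_zero_iff r).2 hr, zero_mul]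

theorem exists_mem_nonZeroDivisors_notMem_maximalIdeal_sq [IsNoetherianRing R]
    (h0 : maximalIdeal R ≠ ⊥) (hR : (maximalIdeal R).annihilator = ⊥) :
    ∃ x ∈ maximalIdeal R, x ∉ maximalIdeal R ^ 2 ∧ x ∈ nonZeroDivisors R := by
  by_contra! hcon
  have hcover : (maximalIdeal R : Set R) ⊆
      ⋃ I ∈ insert (maximalIdeal R ^ 2) (associatedPrimes R R), (I : Set R) := by
    intro x hx
    by_cases hx2 : x ∈ maximalIdeal R ^ 2
    · exact Set.mem_biUnion (Set.mem_insert _ _) hx2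
    · have hxdiv : x ∈ (nonZeroDivisors R : Set R)ᶜ := hcon x hx hx2
      rw [← biUnion_associatedPrimes_eq_compl_nonZeroDivisors] at hxdiv
      exact Set.biUnion_mono (Set.subset_insert _ _) (fun _ _ => subset_rfl) hxdiv
  rw [Ideal.subset_union_prime_finite ((associatedPrimes.finite R R).insert _)
    (maximalIdeal R ^ 2) (maximalIdeal R ^ 2)
    fun I hI hne _ => ((Set.mem_insert_iff.1 hI).resolve_left hne).isPrime] at hcover
  obtain ⟨I, rfl | hI, hle⟩ := hcover
  · refine h0 (Submodule.eq_bot_of_le_smul_of_le_jacobson_bot (maximalIdeal R) _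
      (IsNoetherian.noetherian _) ?_ (maximalIdeal_le_jacobson _))
    rwa [smul_eq_mul, ← pow_two]
  · obtain ⟨hprime, z, hz⟩ := isAssociatedPrime_iff.1 hI
    have hz0 : z ∈ (maximalIdeal R).annihilator := Submodule.mem_annihilator.2 fun r hr => by
      have hrI : r ∈ I := hle hr
      rw [hz, Submodule.mem_colon_singleton, Submodule.mem_bot] at hrI
      rwa [smul_eq_mul, mul_comm]
    rw [hR, Submodule.mem_bot] at hz0
    exact hprime.ne_top (by rw [hz, hz0]; simp)

end Socle

section QuotientSpanSingleton

open TensorProduct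

universe u

variable {R : Type u} [CommRing R]

theorem injective_lTensor_quotient_span_singleton {K P M : Type*} [AddCommGroup K] [Module R K]
    [AddCommGroup P] [Module R P] [AddCommGroup M] [Module R M] {i : K →ₗ[R] P} {g : P →ₗ[R] M}
    (hi : Function.Injective i) (hig : Function.Exact i g) {x : R} (hx : IsSMulRegular M x) :
    Function.Injective (i.lTensor (R ⧸ Ideal.span {x})) := by
  refine (injective_iff_map_eq_zero _).2 fun z hz => ?_
  obtain ⟨y, rfl⟩ := TensorProduct.mk_surjective _ _ _ Ideal.Quotient.mk_surjective z
  rw [TensorProduct.mk_apply, LinearMap.lTensor_tmul, one_tmul_quotient_eq_zero_iff,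
    Submodule.ideal_span_singleton_smul, Submodule.mem_smul_pointwise_iff_exists] at hz
  obtain ⟨u, -, hu⟩ := hz
  have hgu : g u = 0 := hx.right_eq_zero_of_smul (by rw [← map_smul, hu, hig.apply_apply_eq_zero])
  obtain ⟨v, rfl⟩ := (hig u).1 hgu
  rw [TensorProduct.mk_apply, one_tmul_quotient_eq_zero_iff,
    Submodule.ideal_span_singleton_smul, Submodule.mem_smul_pointwise_iff_exists]
  exact ⟨v, trivial, hi (by rw [map_smul, hu])⟩

theorem hasProjectiveDimensionLE_quotient_span_singleton_tensorProduct [IsNoetherianRing R] {x : R}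
    (hx : IsSMulRegular R x) (n : ℕ) (M : Type u) [AddCommGroup M] [Module R M]
    [Module.Finite R M] (hM : IsSMulRegular M x)
    (h : HasProjectiveDimensionLE (ModuleCat.of R M) n) :
    HasProjectiveDimensionLE
      (ModuleCat.of (R ⧸ Ideal.span {x}) ((R ⧸ Ideal.span {x}) ⊗[R] M)) n := by
  induction n generalizing M with
  | zero =>
    rw [HasProjectiveDimensionLE, zero_add, ← projective_iff_hasProjectiveDimensionLT_one,
      ← IsProjective.iff_projective] at h ⊢
    infer_instance
  | succ n ih =>
    obtain ⟨k, g, hg⟩ := Module.Finite.exists_fin' R M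
    have hexact := LinearMap.exact_subtype_ker_map g
    have hker := (hasProjectiveDimensionLT_add_two_iff_of_exact
      (LinearMap.ker g).injective_subtype hg hexact n).1 h
    have hregker : IsSMulRegular (LinearMap.ker g) x :=
      (IsSMulRegular.pi fun _ => hx).submodule _ _
    exact (hasProjectiveDimensionLT_add_two_iff_of_exact
      (i := (LinearMap.ker g).subtype.baseChange (R ⧸ Ideal.span {x}))
      (g := g.baseChange (R ⧸ Ideal.span {x}))
      (injective_lTensor_quotient_span_singleton (LinearMap.ker g).injective_subtype hexact hM)
      (LinearMap.lTensor_surjective _ hg) (lTensor_exact _ hexact hg) n).2 (ih _ hregker hker)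

theorem spanFinrank_comap_mk_span_singleton_le (x : R) {J : Ideal (R ⧸ Ideal.span {x})}
    (hJ : Submodule.FG J) :
    (J.comap (Ideal.Quotient.mk (Ideal.span {x}))).spanFinrank ≤ J.spanFinrank + 1 := by
  classical
  obtain ⟨s, hs, hspan⟩ := hJ.exists_span_finset_card_eq_spanFinrank
  let t : Finset R := s.image Quotient.out
  have hst : (Ideal.Quotient.mk (Ideal.span {x})) '' t = s := by
    simp [t, Set.image_image]
  have hcomap : J.comap (Ideal.Quotient.mk (Ideal.span {x})) =
      Ideal.span (insert x t : Finset R) := by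
    rw [← hspan, ← hst, Ideal.submodule_span_eq, ← Ideal.map_span, Ideal.comap_map_of_surjective' _
      Ideal.Quotient.mk_surjective, Ideal.mk_ker, Finset.coe_insert, Ideal.span_insert, sup_comm]
  calc (J.comap (Ideal.Quotient.mk (Ideal.span {x}))).spanFinrank
      ≤ (insert x t).card := by
        rw [hcomap, ← Set.ncard_coe_finset]
        exact Submodule.spanFinrank_span_le_ncard_of_finite (Finset.finite_toSet _)
    _ ≤ s.card + 1 :=
        (Finset.card_insert_le _ _).trans (Nat.add_le_add_right Finset.card_image_le 1)
    _ = J.spanFinrank + 1 := by rw [hs]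

end QuotientSpanSingleton

section Serre

open TensorProduct

universe u

variable {R : Type u} [CommRing R] [IsLocalRing R] {x : R}

theorem exists_linearMap_residueField_apply_eq_one [IsNoetherianRing R] (hx : x ∈ maximalIdeal R)
    (hx2 : x ∉ maximalIdeal R ^ 2) :
    ∃ φ : maximalIdeal R →ₗ[R] ResidueField R, φ ⟨x, hx⟩ = 1 := by
  have hne : (maximalIdeal R).toCotangent ⟨x, hx⟩ ≠ 0 :=
    fun h => hx2 ((Ideal.toCotangent_eq_zero _ _).1 h)
  obtain ⟨f, hf⟩ :=
    Module.Projective.exists_dual_eq_one (ResidueField R) (V := CotangentSpace R) hne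
  exact ⟨f.restrictScalars R ∘ₗ (maximalIdeal R).toCotangent, hf⟩

theorem smul_one_tmul_eq_zero_of_mem_maximalIdeal (hx : x ∈ maximalIdeal R) {c : R}
    (hc : c ∈ maximalIdeal R) :
    c • ((1 : R ⧸ Ideal.span {x}) ⊗ₜ[R] (⟨x, hx⟩ : maximalIdeal R)) = 0 := by
  rw [← tmul_smul, one_tmul_quotient_eq_zero_iff]
  have hswap : c • (⟨x, hx⟩ : maximalIdeal R) = x • ⟨c, hc⟩ := Subtype.ext (mul_comm _ _)
  exact hswap ▸ Submodule.smul_mem_smul (Ideal.mem_span_singleton_self x) trivial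

-- With `φ : 𝔪 → k` such that `φ x = 1`, the map is `y ↦ 1 ⊗ y - φ y • (1 ⊗ x)`.
theorem exists_linearMap_tensor_maximalIdeal_apply_eq_zero [IsNoetherianRing R]
    (hx : x ∈ maximalIdeal R) (hx2 : x ∉ maximalIdeal R ^ 2) :
    ∃ ψ : maximalIdeal R →ₗ[R] (R ⧸ Ideal.span {x}) ⊗[R] maximalIdeal R, ψ ⟨x, hx⟩ = 0 ∧
      ∀ y, ∃ c : R, ψ y = 1 ⊗ₜ y - c • (1 ⊗ₜ ⟨x, hx⟩) := by
  obtain ⟨φ, hφ⟩ := exists_linearMap_residueField_apply_eq_one hx hx2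
  let κ : ResidueField R →ₗ[R] (R ⧸ Ideal.span {x}) ⊗[R] maximalIdeal R :=
    Submodule.liftQ (maximalIdeal R) (LinearMap.toSpanSingleton R _ (1 ⊗ₜ ⟨x, hx⟩))
      fun c hc => smul_one_tmul_eq_zero_of_mem_maximalIdeal hx hc
  have hκ : ∀ c : R, κ (residue R c) = c • (1 ⊗ₜ ⟨x, hx⟩) := fun _ => rfl
  refine ⟨TensorProduct.mk R _ _ 1 - κ ∘ₗ φ, ?_, fun y => ?_⟩
  · rw [LinearMap.sub_apply, LinearMap.comp_apply, hφ, ← map_one (residue R), hκ, one_smul,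
      TensorProduct.mk_apply, sub_self]
  · obtain ⟨c, hc⟩ := residue_surjective (φ y)
    exact ⟨c, by rw [LinearMap.sub_apply, LinearMap.comp_apply, ← hc, hκ, TensorProduct.mk_apply]⟩

theorem comap_mk_maximalIdeal (I : Ideal R) [IsLocalRing (R ⧸ I)] :
    (maximalIdeal (R ⧸ I)).comap (Ideal.Quotient.mk I) = maximalIdeal R :=
  have := Ideal.Quotient.mk_surjective.isLocalHom (Ideal.Quotient.mk I)
  maximalIdeal_comap _

theorem exists_surjective_linearMap_maximalIdeal_quotient (I : Ideal R) [IsLocalRing (R ⧸ I)] :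
    ∃ π : maximalIdeal R →ₗ[R] maximalIdeal (R ⧸ I), Function.Surjective π ∧
      ∀ y, (π y : R ⧸ I) = Ideal.Quotient.mk I y := by
  have hmem := comap_mk_maximalIdeal I
  refine ⟨{ toFun := fun y => ⟨Ideal.Quotient.mk I y, hmem.ge y.2⟩
            map_add' := fun _ _ => rfl
            map_smul' := fun _ _ => rfl }, ?_, fun _ => rfl⟩
  rintro ⟨s, hs⟩
  obtain ⟨y, rfl⟩ := Ideal.Quotient.mk_surjective s
  exact ⟨⟨y, hmem.le hs⟩, rfl⟩

theorem exists_comp_eq_id_maximalIdeal_quotient [IsNoetherianRing R] (hx : x ∈ maximalIdeal R)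
    (hx2 : x ∉ maximalIdeal R ^ 2) [IsLocalRing (R ⧸ Ideal.span {x})] :
    ∃ (i : maximalIdeal (R ⧸ Ideal.span {x}) →ₗ[R ⧸ Ideal.span {x}]
        (R ⧸ Ideal.span {x}) ⊗[R] maximalIdeal R)
      (r : (R ⧸ Ideal.span {x}) ⊗[R] maximalIdeal R →ₗ[R ⧸ Ideal.span {x}]
        maximalIdeal (R ⧸ Ideal.span {x})), r ∘ₗ i = LinearMap.id := by
  obtain ⟨π, hπ, hπmk⟩ := exists_surjective_linearMap_maximalIdeal_quotient (Ideal.span {x})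
  obtain ⟨ψ, hψx, hψ⟩ := exists_linearMap_tensor_maximalIdeal_apply_eq_zero hx hx2
  have hker : LinearMap.ker π ≤ LinearMap.ker ψ := fun y hy => by
    have hmk : Ideal.Quotient.mk (Ideal.span {x}) y = 0 := by
      rw [← hπmk, LinearMap.mem_ker.1 hy, ZeroMemClass.coe_zero]
    obtain ⟨c, hc⟩ := Ideal.mem_span_singleton'.1 (Ideal.Quotient.eq_zero_iff_mem.1 hmk)
    have hyx : y = c • ⟨x, hx⟩ := Subtype.ext hc.symm
    rw [LinearMap.mem_ker, hyx, map_smul, hψx, smul_zero]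
  let r := π.liftBaseChange (R ⧸ Ideal.span {x})
  have hπx : π ⟨x, hx⟩ = 0 := Subtype.ext <| (hπmk _).trans <|
    Ideal.Quotient.eq_zero_iff_mem.2 (Ideal.mem_span_singleton_self x)
  have hrψ : ∀ y, r (ψ y) = π y := fun y => by
    obtain ⟨c, hc⟩ := hψ y
    rw [hc, ← algebraMap_smul (R ⧸ Ideal.span {x}) c, map_sub, map_smul,
      LinearMap.liftBaseChange_tmul, LinearMap.liftBaseChange_tmul, hπx, smul_zero, smul_zero,
      sub_zero, one_smul]
  let i : maximalIdeal (R ⧸ Ideal.span {x}) →ₗ[R] (R ⧸ Ideal.span {x}) ⊗[R] maximalIdeal R :=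
    (LinearMap.ker π).liftQ ψ hker ∘ₗ (π.quotKerEquivOfSurjective hπ).symm.toLinearMap
  have hiπ : ∀ y, i (π y) = ψ y := fun y => by
    have : (π.quotKerEquivOfSurjective hπ).symm (π y) = Submodule.Quotient.mk y :=
      (LinearEquiv.symm_apply_eq _).2 rfl
    simp only [i, LinearMap.comp_apply, LinearEquiv.coe_coe, this, Submodule.liftQ_apply]
  refine ⟨i.extendScalarsOfSurjective Ideal.Quotient.mk_surjective, r, LinearMap.ext fun s => ?_⟩
  obtain ⟨y, rfl⟩ := hπ s
  rw [LinearMap.comp_apply, LinearMap.extendScalarsOfSurjective_apply, hiπ, hrψ,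
    LinearMap.id_apply]

theorem hasProjectiveDimensionLT_residueField_add_two_iff (n : ℕ) :
    HasProjectiveDimensionLT (ModuleCat.of R (ResidueField R)) (n + 2) ↔
      HasProjectiveDimensionLT (ModuleCat.of R (maximalIdeal R)) (n + 1) :=
  hasProjectiveDimensionLT_add_two_iff_of_exact (maximalIdeal R).injective_subtype
    (maximalIdeal R).mkQ_surjective (LinearMap.exact_subtype_mkQ _) n

variable [IsNoetherianRing R]

theorem hasProjectiveDimensionLE_residueField_quotient (hx : x ∈ maximalIdeal R)
    (hx2 : x ∉ maximalIdeal R ^ 2) (hreg : IsSMulRegular R x) [IsLocalRing (R ⧸ Ideal.span {x})]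
    {n : ℕ} (h : HasProjectiveDimensionLE (ModuleCat.of R (ResidueField R)) n) :
    HasProjectiveDimensionLE (ModuleCat.of (R ⧸ Ideal.span {x})
      (ResidueField (R ⧸ Ideal.span {x}))) (n + 1) := by
  have hmax : HasProjectiveDimensionLE (ModuleCat.of R (maximalIdeal R)) n :=
    (hasProjectiveDimensionLT_residueField_add_two_iff n).1
      (hasProjectiveDimensionLT_of_ge _ (n + 1) _ (by omega))
  have := hasProjectiveDimensionLE_quotient_span_singleton_tensorProduct hreg n (maximalIdeal R)
    (hreg.submodule _ _) hmax
  obtain ⟨i, r, hri⟩ := exists_comp_eq_id_maximalIdeal_quotient hx hx2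
  have hretract : Retract (ModuleCat.of (R ⧸ Ideal.span {x}) (maximalIdeal (R ⧸ Ideal.span {x})))
      (ModuleCat.of (R ⧸ Ideal.span {x}) ((R ⧸ Ideal.span {x}) ⊗[R] maximalIdeal R)) :=
    ⟨ModuleCat.ofHom i, ModuleCat.ofHom r, by rw [← ModuleCat.ofHom_comp, hri, ModuleCat.ofHom_id]⟩
  exact (hasProjectiveDimensionLT_residueField_add_two_iff n).2
    (hretract.hasProjectiveDimensionLT (n + 1))

theorem isRegularLocalRing_of_quotient_span_singleton (hreg : x ∈ nonZeroDivisors R)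
    [IsRegularLocalRing (R ⧸ Ideal.span {x})] : IsRegularLocalRing R := by
  refine IsRegularLocalRing.of_spanFinrank_maximalIdeal_le R ?_
  have hspan := spanFinrank_comap_mk_span_singleton_le x
    (IsNoetherian.noetherian (maximalIdeal (R ⧸ Ideal.span {x})))
  rw [comap_mk_maximalIdeal] at hspan
  calc ((maximalIdeal R).spanFinrank : WithBot ℕ∞)
      ≤ (maximalIdeal (R ⧸ Ideal.span {x})).spanFinrank + 1 := by exact_mod_cast hspan
    _ = ringKrullDim (R ⧸ Ideal.span {x}) + 1 := by
        rw [IsRegularLocalRing.spanFinrank_maximalIdeal]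
    _ ≤ ringKrullDim R := ringKrullDim_quotient_succ_le_of_nonZeroDivisor hreg

theorem isRegularLocalRing_of_maximalIdeal_eq_bot (h0 : maximalIdeal R = ⊥) :
    IsRegularLocalRing R :=
  IsRegularLocalRing.of_spanFinrank_maximalIdeal_le R
    (by simpa [h0] using ringKrullDim_nonneg_of_nontrivial (R := R))

theorem exists_ringKrullDim_eq_natCast (R : Type*) [CommRing R] [FiniteRingKrullDim R] :
    ∃ d : ℕ, ringKrullDim R = d :=
  ⟨_, Order.krullDim_eq_length_of_finiteDimensionalOrder⟩

theorem isRegularLocalRing_of_hasProjectiveDimensionLE (R : Type u) [CommRing R] [IsLocalRing R]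
    [IsNoetherianRing R] {n : ℕ}
    (h : HasProjectiveDimensionLE (ModuleCat.of R (ResidueField R)) n) : IsRegularLocalRing R := by
  obtain ⟨d, hd⟩ : ∃ d : ℕ, ringKrullDim R < d :=
    (exists_ringKrullDim_eq_natCast R).imp' Nat.succ fun d hd => by
      rw [hd]
      exact_mod_cast d.lt_succ_self
  induction d generalizing R n with
  | zero => exact absurd ringKrullDim_nonneg_of_nontrivial (not_le.2 (by simpa using hd))
  | succ d ih =>
    by_cases h0 : maximalIdeal R = ⊥
    · exact isRegularLocalRing_of_maximalIdeal_eq_bot h0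
    obtain ⟨x, hx, hx2, hreg⟩ :=
      exists_mem_nonZeroDivisors_notMem_maximalIdeal_sq h0 (annihilator_maximalIdeal_eq_bot h0 h)
    have : Nontrivial (R ⧸ Ideal.span {x}) :=
      Ideal.Quotient.nontrivial_iff.2 fun htop => (maximalIdeal.isMaximal R).ne_top
        (top_le_iff.1 (htop ▸ (Ideal.span_singleton_le_iff_mem _).2 hx))
    have : IsLocalRing (R ⧸ Ideal.span {x}) :=
      IsLocalRing.of_surjective' (Ideal.Quotient.mk _) Ideal.Quotient.mk_surjective
    have hdim : ringKrullDim (R ⧸ Ideal.span {x}) < d := by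
      have := (ringKrullDim_quotient_succ_le_of_nonZeroDivisor hreg).trans_lt hd
      push_cast at this
      exact lt_of_add_lt_add_right this
    have hregular : IsSMulRegular R x := Module.Flat.isSMulRegular_of_nonZeroDivisors hreg
    have := ih _ (hasProjectiveDimensionLE_residueField_quotient hx hx2 hregular h) hdim
    exact isRegularLocalRing_of_quotient_span_singleton hreg

end Serre

section SingularLocus

theorem isRegularLocal_of_hasProjectiveDimensionLE {R : Type} [CommRing R] [IsNoetherianRing R]
    [IsLocalRing R] {n : ℕ} (h : HasProjectiveDimensionLE (ModuleCat.of R (ResidueField R)) n) :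
    IsRegularLocal R := by
  have hreg : IsRegularLocalRing R := isRegularLocalRing_of_hasProjectiveDimensionLE R h
  obtain ⟨s, hcard, hspan⟩ :=
    (IsNoetherian.noetherian (maximalIdeal R)).exists_span_finset_card_eq_spanFinrank
  exact ⟨inferInstance, s, hspan, hcard ▸ (isRegularLocalRing_iff R).1 hreg⟩

theorem nonempty_localizedModule_quotient_linearEquiv_residueField {R : Type*} [CommRing R]
    (p : Ideal R) [p.IsPrime] :
    Nonempty (LocalizedModule p.primeCompl (R ⧸ p) ≃ₗ[Localization.AtPrime p]
      ResidueField (Localization.AtPrime p)) := by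
  let pLoc := p.localized' (Localization.AtPrime p) p.primeCompl
    (Algebra.linearMap R (Localization.AtPrime p))
  have hpLoc : pLoc = maximalIdeal (Localization.AtPrime p) := by
    rw [← Localization.AtPrime.map_eq_maximalIdeal,
      ← Ideal.localized'_eq_map (Localization.AtPrime p) p.primeCompl]
  let e : LocalizedModule p.primeCompl (R ⧸ p) ≃ₗ[R] Localization.AtPrime p ⧸ pLoc :=
    IsLocalizedModule.linearEquiv p.primeCompl (LocalizedModule.mkLinearMap p.primeCompl (R ⧸ p))
      (p.toLocalizedQuotient' (Localization.AtPrime p) p.primeCompl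
        (Algebra.linearMap R (Localization.AtPrime p)))
  exact ⟨(e.extendScalarsOfIsLocalization p.primeCompl (Localization.AtPrime p)).trans
    (Submodule.quotEquivOfEq _ _ hpLoc)⟩

variable {R : Type} [CommRing R] [IsNoetherianRing R]

theorem isRegularLocal_of_free_localizedModule_iterate_syzygy (p : Ideal R) [p.IsPrime] (k : ℕ)
    (h : Module.Free (Localization.AtPrime p)
      (LocalizedModule p.primeCompl ↑(syzygy^[k] (FGModuleCat.of R (R ⧸ p))))) :
    IsRegularLocal (Localization.AtPrime p) := by
  have hpd : HasProjectiveDimensionLE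
      (ModuleCat.of (Localization.AtPrime p) (LocalizedModule p.primeCompl (R ⧸ p))) k :=
    (free_localizedModule_iterate_syzygy_iff p k _).1 h
  obtain ⟨e⟩ := nonempty_localizedModule_quotient_linearEquiv_residueField p
  exact isRegularLocal_of_hasProjectiveDimensionLE
    (hasProjectiveDimensionLT_of_iso e.toModuleIso (k + 1))

theorem iInf_annihilator_tor_one_le_torOneAnnihilator [IsLocalRing R] (hCM : IsCMLocalRing R)
    {d : ℕ} (hd : ringKrullDim R = d) (M N : FGModuleCat.{0} R) :
    ⨅ (K : ModuleCat.{0} R) (_ : MemCM0 R K) (L : ModuleCat.{0} R) (_ : MemCM0 R L),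
        Module.annihilator R (TorMod R 1 K L) ≤
      torOneAnnihilator R N ↑(syzygy^[d] (syzygy^[d] M)) :=
  calc _ ≤ ⨅ (k) (l), torOneAnnihilator R ↑(syzygy^[d] (truncation M k))
          ↑(syzygy^[d] (truncation N l)) :=
        le_iInf₂ fun k l =>
          (iInf₂_le_of_le _ (memCM0_iterate_syzygy_truncation hCM hd M k)
            (iInf₂_le _ (memCM0_iterate_syzygy_truncation hCM hd N l))).trans
          (annihilator_tor_one_le_torOneAnnihilator _ _)
    _ ≤ _ := iInf_torOneAnnihilator_iterate_syzygy_truncation_le d M N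

theorem iInf_annihilator_tor_one_le_of_not_isRegularLocal [IsLocalRing R] (hCM : IsCMLocalRing R)
    (p : Ideal R) [p.IsPrime] (hp : ¬ IsRegularLocal (Localization.AtPrime p)) :
    ⨅ (K : ModuleCat.{0} R) (_ : MemCM0 R K) (L : ModuleCat.{0} R) (_ : MemCM0 R L),
        Module.annihilator R (TorMod R 1 K L) ≤ p := by
  obtain ⟨d, hd⟩ := exists_ringKrullDim_eq_natCast R
  have htor := iInf_annihilator_tor_one_le_torOneAnnihilator hCM hd
    (FGModuleCat.of R (R ⧸ p)) (FGModuleCat.of R (R ⧸ p))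
  rw [← Function.iterate_add_apply] at htor
  by_contra hle
  exact hp (isRegularLocal_of_free_localizedModule_iterate_syzygy p (d + d)
    (free_localizedModule_of_not_torOneAnnihilator_le p fun h => hle (htor.trans h)))

end SingularLocus

/-- Let `R` be a Cohen-Macaulay noetherian local ring. Then the singular
locus of `R` is contained in `V(⋂_{i>0, K,L ∈ CM₀(R)} Ann_R Tor_i(K,L))`. -/
theorem stmt7 (R : Type) [CommRing R] [IsNoetherianRing R] [IsLocalRing R]
    (hCM : IsCMLocalRing R) :
    singularLocus R ⊆ PrimeSpectrum.zeroLocus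
      ((⨅ (i : ℕ) (_ : 0 < i) (K : ModuleCat.{0} R) (_ : MemCM0 R K)
          (L : ModuleCat.{0} R) (_ : MemCM0 R L),
          Module.annihilator R (TorMod R i K L) : Ideal R) : Set R) := by
  intro p hp
  rw [PrimeSpectrum.mem_zeroLocus, SetLike.coe_subset_coe]
  exact (iInf₂_le 1 one_pos).trans
    (iInf_annihilator_tor_one_le_of_not_isRegularLocal hCM p.asIdeal hp)

end
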